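/- arXiv:2507.16610 — 2 statements merged into one kernel-verified Lean document; each statement's English description precedes it below -/
import Mathlib

section
/- For C ∈ [0, 2], the maximum of z² − x² over all nonnegative real triples (x, y, z) satisfying x² + y² + z² = 1 and x + y + z = √(1 + C) equals (1/2)·√((1 + f₃ + C/3)·(1 + f₃ − C)), where f₃ = √(1 + C)·√(1 − C/3). -/
/-!
Put `s = √(1 + C)` and `t = √(1 - C / 3)`, so that `s ^ 2 + 3 * t ^ 2 = 4` and `t ≤ s ≤ 3 * t`.
With `p = x + z`, the plane gives `y = s - p` and the sphere then expresses `(z - x) ^ 2` as a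
quadratic in `p`. Hence `(z ^ 2 - x ^ 2) ^ 2 = p ^ 2 * (z - x) ^ 2` is a quartic in `p`, whose
maximum over `p ≥ 0` is at `p = (s + t) / 2`: the gap to the maximal value is the square of
`2 * p - (s + t)` times a quadratic with nonnegative coefficients.
-/

section CommRing

variable {R : Type*} [CommRing R] {s t x y z : R}

theorem two_mul_sq_sub_eq_of_sphere_of_plane
    (sphere : 4 * (x ^ 2 + y ^ 2 + z ^ 2) = s ^ 2 + 3 * t ^ 2) (plane : x + y + z = s) :
    2 * (z - x) ^ 2 = 8 * s * (x + z) - 6 * (x + z) ^ 2 + 3 * t ^ 2 - 3 * s ^ 2 := by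
  obtain rfl : y = s - (x + z) := by linear_combination plane
  linear_combination sphere

variable [LinearOrder R] [IsStrictOrderedRing R]

theorem sq_mul_quadratic_le {p : R} (hp : 0 ≤ p) (hst : 0 ≤ s + t) (hs : s ≤ 3 * t) :
    8 * p ^ 2 * (8 * s * p - 6 * p ^ 2 + 3 * t ^ 2 - 3 * s ^ 2) ≤
      (s + t) ^ 3 * (3 * t - s) := by
  have : 0 ≤ 3 * t - s := sub_nonneg.2 hs
  have gap_nonneg : 0 ≤ (2 * p - (s + t)) ^ 2 *
      (12 * p ^ 2 + 4 * (3 * t - s) * p + (s + t) * (3 * t - s)) := by positivity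
  linear_combination gap_nonneg

theorem sq_four_mul_sq_sub_sq_le_of_sphere_of_plane
    (hxz : 0 ≤ x + z) (hst : 0 ≤ s + t) (hs : s ≤ 3 * t)
    (sphere : 4 * (x ^ 2 + y ^ 2 + z ^ 2) = s ^ 2 + 3 * t ^ 2) (plane : x + y + z = s) :
    (4 * (z ^ 2 - x ^ 2)) ^ 2 ≤ (s + t) ^ 3 * (3 * t - s) :=
  calc (4 * (z ^ 2 - x ^ 2)) ^ 2 = 8 * (x + z) ^ 2 * (2 * (z - x) ^ 2) := by ring
    _ = 8 * (x + z) ^ 2 *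
        (8 * s * (x + z) - 6 * (x + z) ^ 2 + 3 * t ^ 2 - 3 * s ^ 2) := by
      rw [two_mul_sq_sub_eq_of_sphere_of_plane sphere plane]
    _ ≤ (s + t) ^ 3 * (3 * t - s) := sq_mul_quadratic_le hxz hst hs

end CommRing

section Field

variable {K : Type*} [Field K] [LinearOrder K] [IsStrictOrderedRing K] {s t e : K}

theorem exists_nonneg_sphere_plane_sq_sub_sq_eq (hts : t ≤ s) (hst : 0 ≤ s + t)
    (he_sq : e ^ 2 = (s + t) * (3 * t - s)) :
    ∃ x y z : K, 0 ≤ x ∧ 0 ≤ y ∧ 0 ≤ z ∧ x ^ 2 + y ^ 2 + z ^ 2 = (s ^ 2 + 3 * t ^ 2) / 4 ∧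
      x + y + z = s ∧ (s + t) * e / 4 = z ^ 2 - x ^ 2 := by
  have e_sq_le : e ^ 2 ≤ (s + t) ^ 2 := by
    rw [he_sq, sq]
    exact mul_le_mul_of_nonneg_left (by linarith) hst
  obtain ⟨neg_le_e, e_le⟩ := abs_le_of_sq_le_sq' e_sq_le hst
  refine ⟨(s + t - e) / 4, (s - t) / 2, (s + t + e) / 4,
    by linarith, by linarith, by linarith, ?_, by ring, by ring⟩
  linear_combination he_sq / 8

theorem isGreatest_sq_sub_sq_of_sphere_of_plane (hts : t ≤ s) (hst : s ≤ 3 * t)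
    (he : 0 ≤ e) (he_sq : e ^ 2 = (s + t) * (3 * t - s)) :
    IsGreatest
      {w : K | ∃ x y z : K, 0 ≤ x ∧ 0 ≤ y ∧ 0 ≤ z ∧
        x ^ 2 + y ^ 2 + z ^ 2 = (s ^ 2 + 3 * t ^ 2) / 4 ∧ x + y + z = s ∧ w = z ^ 2 - x ^ 2}
      ((s + t) * e / 4) := by
  have hadd : 0 ≤ s + t := by linarith
  refine ⟨exists_nonneg_sphere_plane_sq_sub_sq_eq hts hadd he_sq, ?_⟩
  rintro _ ⟨x, y, z, hx, -, hz, sphere, plane, rfl⟩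
  have sq_le : (4 * (z ^ 2 - x ^ 2)) ^ 2 ≤ ((s + t) * e) ^ 2 :=
    calc (4 * (z ^ 2 - x ^ 2)) ^ 2 ≤ (s + t) ^ 3 * (3 * t - s) :=
          sq_four_mul_sq_sub_sq_le_of_sphere_of_plane (add_nonneg hx hz) hadd hst
            (by linarith) plane
      _ = ((s + t) * e) ^ 2 := by rw [mul_pow, he_sq]; ring
  have := le_of_sq_le_sq sq_le (mul_nonneg hadd he)
  linarith

end Field

theorem half_mul_sqrt_eq_of_sq_eq {C s t : ℝ} (hs : s ^ 2 = 1 + C) (ht : t ^ 2 = 1 - C / 3)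
    (hst : 0 ≤ s + t) :
    1 / 2 * √((1 + s * t + C / 3) * (1 + s * t - C)) =
      (s + t) * √((s + t) * (3 * t - s)) / 4 := by
  have left_factor : 1 + s * t + C / 3 = (s + t) ^ 2 / 2 := by
    linear_combination -hs / 2 - ht / 2
  have right_factor : 1 + s * t - C = (s + t) * (3 * t - s) / 2 := by
    linear_combination hs / 2 - 3 * ht / 2
  have product : (1 + s * t + C / 3) * (1 + s * t - C) =
      ((s + t) / 2) ^ 2 * ((s + t) * (3 * t - s)) := by
    rw [left_factor, right_factor]; ring
  rw [product, Real.sqrt_mul (sq_nonneg _), Real.sqrt_sq (by positivity)]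
  ring

theorem stmt13 (C : ℝ) (hC : C ∈ Set.Icc (0 : ℝ) 2) :
    IsGreatest
      { w : ℝ | ∃ x y z : ℝ, 0 ≤ x ∧ 0 ≤ y ∧ 0 ≤ z ∧
          x ^ 2 + y ^ 2 + z ^ 2 = 1 ∧ x + y + z = Real.sqrt (1 + C) ∧
          w = z ^ 2 - x ^ 2 }
      ((1 / 2) * Real.sqrt
        ((1 + Real.sqrt (1 + C) * Real.sqrt (1 - C / 3) + C / 3) *
          (1 + Real.sqrt (1 + C) * Real.sqrt (1 - C / 3) - C))) := by
  obtain ⟨hC₀, hC₂⟩ := hC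
  have hs_sq : √(1 + C) ^ 2 = 1 + C := Real.sq_sqrt (by linarith)
  have ht_sq : √(1 - C / 3) ^ 2 = 1 - C / 3 := Real.sq_sqrt (by linarith)
  have hts : √(1 - C / 3) ≤ √(1 + C) := Real.sqrt_le_sqrt (by linarith)
  have hst : √(1 + C) ≤ 3 * √(1 - C / 3) :=
    le_of_sq_le_sq (by rw [mul_pow]; linarith) (by positivity)
  have hprod : 0 ≤ (√(1 + C) + √(1 - C / 3)) * (3 * √(1 - C / 3) - √(1 + C)) :=
    mul_nonneg (by positivity) (sub_nonneg.2 hst)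
  have radius : (√(1 + C) ^ 2 + 3 * √(1 - C / 3) ^ 2) / 4 = 1 := by linarith
  rw [half_mul_sqrt_eq_of_sq_eq hs_sq ht_sq (by positivity)]
  simpa only [radius] using
    isGreatest_sq_sub_sq_of_sphere_of_plane hts hst (Real.sqrt_nonneg _) (Real.sq_sqrt hprod)
end

section
/- For C ∈ [0, 2], the minimum of x·z over all nonnegative real triples (x, y, z) satisfying x² + y² + z² = 1 and x + y + z = √(1 + C) is: 0 if 0 ≤ C ≤ 1; (C − 1)/4 if 1 ≤ C ≤ 5/3; and (1/9)·(√(1 + C) − √(1 − C/2))² if 5/3 ≤ C ≤ 2. -/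
/-!
Put `s = √(1 + C)`. Since `2xz = (x + z)² - (x² + z²)`, the two constraints make `xz` a function of
`p = x + z` alone, the upward parabola `(p - s/2)² + (s² - 2)/4`. A sum `p` is realised by a
nonnegative triple exactly when `0 ≤ p ≤ s`, `0 ≤ xz` and `4xz ≤ p²`. As `s` grows, the minimum is
first a zero of the parabola, then its vertex `p = s/2`, and finally, once the vertex violates
`4xz ≤ p²`, the smallest `p` satisfying `4xz ≤ p²`, which corresponds to `x = z`.
-/

open Set

/-- The values of `x * z` over nonnegative triples on the unit sphere with coordinate sum `s`. -/
def productValues (s : ℝ) : Set ℝ :=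
  {w | ∃ x y z : ℝ, 0 ≤ x ∧ 0 ≤ y ∧ 0 ≤ z ∧ x ^ 2 + y ^ 2 + z ^ 2 = 1 ∧ x + y + z = s ∧ w = x * z}

/-- The value that `x + z = p` forces on `x * z` when `x ^ 2 + y ^ 2 + z ^ 2 = 1` and
`x + y + z = s`. -/
noncomputable def productOfSum (s p : ℝ) : ℝ :=
  (p - s / 2) ^ 2 + (s ^ 2 - 2) / 4

/-- The values of `p = x + z` over the triples of `productValues s`: the bound `p ≤ s` expresses
`0 ≤ y`, and the remaining conditions express that `x` and `z` are real and nonnegative. -/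
def admissibleSums (s : ℝ) : Set ℝ :=
  {p | p ∈ Icc 0 s ∧ 0 ≤ productOfSum s p ∧ 4 * productOfSum s p ≤ p ^ 2}

theorem exists_nonneg_add_eq_mul_eq_iff {p q : ℝ} :
    (∃ x z : ℝ, 0 ≤ x ∧ 0 ≤ z ∧ x + z = p ∧ x * z = q) ↔ 0 ≤ p ∧ 0 ≤ q ∧ 4 * q ≤ p ^ 2 := by
  constructor
  · rintro ⟨x, z, hx, hz, rfl, rfl⟩
    exact ⟨by positivity, by positivity, by linarith [four_mul_le_sq_add x z]⟩
  · rintro ⟨hp, hq, hpq⟩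
    have hsqrt_sq : √(p ^ 2 - 4 * q) ^ 2 = p ^ 2 - 4 * q := Real.sq_sqrt (by linarith)
    have hsqrt_le : √(p ^ 2 - 4 * q) ≤ p := Real.sqrt_le_iff.mpr ⟨hp, by linarith⟩
    have hsqrt_nonneg := Real.sqrt_nonneg (p ^ 2 - 4 * q)
    exact ⟨(p + √(p ^ 2 - 4 * q)) / 2, (p - √(p ^ 2 - 4 * q)) / 2,
      by linarith, by linarith, by ring, by linarith⟩

theorem sq_add_sq_add_sq_eq_one_iff_mul_eq_productOfSum {s x y z : ℝ} (hsum : x + y + z = s) :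
    x ^ 2 + y ^ 2 + z ^ 2 = 1 ↔ x * z = productOfSum s (x + z) := by
  subst hsum
  unfold productOfSum
  constructor <;> intro h <;> linarith

theorem productValues_eq_image (s : ℝ) :
    productValues s = productOfSum s '' admissibleSums s := by
  ext w
  constructor
  · rintro ⟨x, y, z, hx, hy, hz, hsphere, hsum, rfl⟩
    have hmul := (sq_add_sq_add_sq_eq_one_iff_mul_eq_productOfSum hsum).mp hsphere
    obtain ⟨hp, hq, hpq⟩ := exists_nonneg_add_eq_mul_eq_iff.mp ⟨x, z, hx, hz, rfl, hmul⟩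
    exact ⟨x + z, ⟨⟨hp, by linarith⟩, hq, hpq⟩, hmul.symm⟩
  · rintro ⟨p, ⟨⟨hp, hps⟩, hq, hpq⟩, rfl⟩
    obtain ⟨x, z, hx, hz, rfl, hmul⟩ := exists_nonneg_add_eq_mul_eq_iff.mpr ⟨hp, hq, hpq⟩
    have hsum : x + (s - (x + z)) + z = s := by ring
    exact ⟨x, s - (x + z), z, hx, sub_nonneg.mpr hps, hz,
      (sq_add_sq_add_sq_eq_one_iff_mul_eq_productOfSum hsum).mpr hmul, hsum, hmul.symm⟩

theorem productOfSum_half (s : ℝ) : productOfSum s (s / 2) = (s ^ 2 - 2) / 4 := by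
  simp [productOfSum]

theorem productOfSum_half_le (s p : ℝ) : productOfSum s (s / 2) ≤ productOfSum s p := by
  rw [productOfSum_half]
  exact le_add_of_nonneg_left (sq_nonneg _)

theorem monotoneOn_productOfSum (s : ℝ) : MonotoneOn (productOfSum s) (Ici (s / 2)) := by
  intro p hp p' _ hpp'
  have hp_nonneg : 0 ≤ p - s / 2 := sub_nonneg.mpr hp
  unfold productOfSum
  gcongr

theorem four_mul_productOfSum_le_sq_iff {s p : ℝ} (hs : s ^ 2 ≤ 3) :
    4 * productOfSum s p ≤ p ^ 2 ↔ |3 * p - 2 * s| ≤ 2 * √((3 - s ^ 2) / 2) := by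
  have hsq : (2 * √((3 - s ^ 2) / 2)) ^ 2 = 6 - 2 * s ^ 2 := by
    rw [mul_pow, Real.sq_sqrt (by linarith)]
    ring
  rw [← sq_le_sq₀ (abs_nonneg (3 * p - 2 * s)) (by positivity), sq_abs, hsq]
  unfold productOfSum
  constructor <;> intro h <;> linarith

theorem productOfSum_two_thirds_mul_sub_sqrt {s : ℝ} (hs : s ^ 2 ≤ 3) :
    productOfSum s (2 / 3 * (s - √((3 - s ^ 2) / 2))) =
      1 / 9 * (s - √((3 - s ^ 2) / 2)) ^ 2 := by
  have hsq : √((3 - s ^ 2) / 2) ^ 2 = (3 - s ^ 2) / 2 := Real.sq_sqrt (by linarith)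
  unfold productOfSum
  linarith

theorem isLeast_productValues_zero {s : ℝ} (hs : 1 ≤ s) (hs_upper : s ^ 2 ≤ 2) :
    IsLeast (productValues s) 0 := by
  rw [productValues_eq_image]
  refine ⟨⟨(s + √(2 - s ^ 2)) / 2, ?_⟩, ?_⟩
  · have hsqrt_le : √(2 - s ^ 2) ≤ s := Real.sqrt_le_iff.mpr ⟨by linarith, by nlinarith⟩
    have hzero : productOfSum s ((s + √(2 - s ^ 2)) / 2) = 0 := by
      have hsq : √(2 - s ^ 2) ^ 2 = 2 - s ^ 2 := Real.sq_sqrt (by linarith)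
      unfold productOfSum
      linarith
    refine ⟨⟨⟨by positivity, by linarith⟩, hzero.ge, ?_⟩, hzero⟩
    rw [hzero, mul_zero]
    positivity
  · rintro _ ⟨p, ⟨-, hq, -⟩, rfl⟩
    exact hq

theorem isLeast_productValues_vertex {s : ℝ} (hs : 0 ≤ s) (hs_lower : 2 ≤ s ^ 2)
    (hs_upper : s ^ 2 ≤ 8 / 3) : IsLeast (productValues s) ((s ^ 2 - 2) / 4) := by
  rw [productValues_eq_image, ← productOfSum_half]
  refine ⟨mem_image_of_mem _ ⟨⟨by linarith, by linarith⟩, ?_, ?_⟩, ?_⟩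
  · linarith [productOfSum_half s]
  · linarith [productOfSum_half s]
  · rintro _ ⟨p, -, rfl⟩
    exact productOfSum_half_le s p

theorem isLeast_admissibleSums {s : ℝ} (hs : 1 ≤ s) (hs_upper : s ^ 2 ≤ 3) :
    IsLeast (admissibleSums s) (2 / 3 * (s - √((3 - s ^ 2) / 2))) := by
  have hsqrt_nonneg := Real.sqrt_nonneg ((3 - s ^ 2) / 2)
  have hsqrt_le : √((3 - s ^ 2) / 2) ≤ s := Real.sqrt_le_iff.mpr ⟨by linarith, by nlinarith⟩
  refine ⟨⟨⟨by linarith, by linarith⟩, ?_, ?_⟩, ?_⟩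
  · rw [productOfSum_two_thirds_mul_sub_sqrt hs_upper]
    positivity
  · rw [productOfSum_two_thirds_mul_sub_sqrt hs_upper]
    exact le_of_eq (by ring)
  · rintro p ⟨-, -, hpq⟩
    have := (abs_le.mp ((four_mul_productOfSum_le_sq_iff hs_upper).mp hpq)).1
    linarith

theorem four_mul_sqrt_three_sub_sq_div_two_le {s : ℝ} (hs : 0 ≤ s) (hs_lower : 8 / 3 ≤ s ^ 2) :
    4 * √((3 - s ^ 2) / 2) ≤ s := by
  have : √((3 - s ^ 2) / 2) ≤ s / 4 := Real.sqrt_le_iff.mpr ⟨by linarith, by linarith⟩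
  linarith

theorem isLeast_productValues_diagonal {s : ℝ} (hs : 0 ≤ s) (hs_lower : 8 / 3 ≤ s ^ 2)
    (hs_upper : s ^ 2 ≤ 3) :
    IsLeast (productValues s) (1 / 9 * (s - √((3 - s ^ 2) / 2)) ^ 2) := by
  have hleast := isLeast_admissibleSums (by nlinarith) hs_upper
  have hsubset : admissibleSums s ⊆ Ici (s / 2) := fun p hp => by
    have hle := hleast.2 hp
    have hsqrt_le := four_mul_sqrt_three_sub_sq_div_two_le hs hs_lower
    exact mem_Ici.mpr (by linarith)
  rw [productValues_eq_image, ← productOfSum_two_thirds_mul_sub_sqrt hs_upper]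
  exact ((monotoneOn_productOfSum s).mono hsubset).map_isLeast hleast

theorem stmt16 (C : ℝ) (hC : C ∈ Set.Icc (0 : ℝ) 2) :
    (C ≤ 1 →
      IsLeast { w : ℝ | ∃ x y z : ℝ, 0 ≤ x ∧ 0 ≤ y ∧ 0 ≤ z ∧
          x ^ 2 + y ^ 2 + z ^ 2 = 1 ∧ x + y + z = Real.sqrt (1 + C) ∧
          w = x * z } 0) ∧
    (1 ≤ C → C ≤ 5 / 3 →
      IsLeast { w : ℝ | ∃ x y z : ℝ, 0 ≤ x ∧ 0 ≤ y ∧ 0 ≤ z ∧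
          x ^ 2 + y ^ 2 + z ^ 2 = 1 ∧ x + y + z = Real.sqrt (1 + C) ∧
          w = x * z } ((C - 1) / 4)) ∧
    (5 / 3 ≤ C →
      IsLeast { w : ℝ | ∃ x y z : ℝ, 0 ≤ x ∧ 0 ≤ y ∧ 0 ≤ z ∧
          x ^ 2 + y ^ 2 + z ^ 2 = 1 ∧ x + y + z = Real.sqrt (1 + C) ∧
          w = x * z }
        ((1 / 9) * (Real.sqrt (1 + C) - Real.sqrt (1 - C / 2)) ^ 2)) := by
  obtain ⟨hC0, hC2⟩ := hC
  have hs : 0 ≤ √(1 + C) := Real.sqrt_nonneg _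
  have hs_sq : √(1 + C) ^ 2 = 1 + C := Real.sq_sqrt (by linarith)
  refine ⟨fun hC1 => ?_, fun hC1 hC53 => ?_, fun hC53 => ?_⟩
  · exact isLeast_productValues_zero (Real.one_le_sqrt.mpr (by linarith)) (by linarith)
  · have hvalue : (C - 1) / 4 = (√(1 + C) ^ 2 - 2) / 4 := by rw [hs_sq]; ring
    rw [hvalue]
    exact isLeast_productValues_vertex hs (by linarith) (by linarith)
  · have hvalue : 1 - C / 2 = (3 - √(1 + C) ^ 2) / 2 := by rw [hs_sq]; ring
    rw [hvalue]
    exact isLeast_productValues_diagonal hs (by linarith) (by linarith)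
end
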